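/- Let θ : S → R be a ring extension admitting a reflexive homomorphism φ (so θ is a Frobenius-type extension in the regular case), and assume that the left S-module R (via restriction of scalars along θ) is finitely generated projective. Then the right S-module R (via restriction of scalars along θ) is finitely generated projective. -/

import Mathlib

/- STATEMENT 16: Let θ : S → R be a ring extension with a reflexive homomorphism φ.
If the left S-module R (via θ) is finitely generated projective, then the right
S-module R (via θ) is finitely generated projective. -/

universe u v

/-- `φ : R → S` is a reflexive homomorphism for the ring extension `θ : S →+* R`:
it is additive, `S`-bilinear with respect to `θ`, and the induced maps
`l_φ : R → Hom_S(R,S)`, `w ↦ (r ↦ φ (r * w))`, and `r_φ : R → Hom_{Sᵒᵖ}(R,S)`,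
`w ↦ (r ↦ φ (w * r))`, are bijective (bijectivity onto the set of left,
resp. right, `S`-linear maps `R → S` is expressed elementwise). -/
def IsReflexiveHom {S : Type u} {R : Type v} [Ring S] [Ring R] (θ : S →+* R)
    (φ : R → S) : Prop :=
  (∀ a b : R, φ (a + b) = φ a + φ b) ∧
  (∀ (s : S) (r : R), φ (θ s * r) = s * φ r) ∧
  (∀ (s : S) (r : R), φ (r * θ s) = φ r * s) ∧
  Function.Injective (fun w : R => (fun r : R => φ (r * w))) ∧
  (∀ g : R → S, ((∀ a b : R, g (a + b) = g a + g b) ∧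
      ∀ (s : S) (r : R), g (θ s * r) = s * g r) → ∃ w : R, ∀ r, g r = φ (r * w)) ∧
  Function.Injective (fun w : R => (fun r : R => φ (w * r))) ∧
  (∀ g : R → S, ((∀ a b : R, g (a + b) = g a + g b) ∧
      ∀ (s : S) (r : R), g (r * θ s) = g r * s) → ∃ w : R, ∀ r, g r = φ (w * r))

/-!
By definition `l_φ` is a bijection of `R` onto the left dual `Hom_S(R, S)`, and it is right
`S`-linear when the dual carries the right `S`-action coming from `S`. So the right `S`-module `R`
is isomorphic to the left dual of the left `S`-module `R`. A finitely generated projective left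
`S`-module is a retract of some `Sⁿ`, hence its dual is a retract of `Hom_S(Sⁿ, S) ≅ Sⁿ`, a finite
free right `S`-module.
-/

open MulOpposite

section Dual

variable (S : Type*) [Semiring S]

/-- A semiring as a right module over itself is the regular module of the opposite semiring; this
is what makes it a free right module of rank one. -/
def opLinearEquivSelf : S ≃ₗ[Sᵐᵒᵖ] Sᵐᵒᵖ where
  __ := opAddEquiv
  map_smul' _ _ := rfl

/-- The isomorphism `Hom_S(Sⁿ, S) ≅ Sⁿ` of right `S`-modules, with `Sⁿ` on the right-hand side
encoded as the left `Sᵐᵒᵖ`-module `ι → Sᵐᵒᵖ`. -/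
def piDualEquiv (ι : Type*) [Fintype ι] [DecidableEq ι] :
    ((ι → S) →ₗ[S] S) ≃ₗ[Sᵐᵒᵖ] (ι → Sᵐᵒᵖ) :=
  (LinearMap.lsum S (fun _ : ι => S) Sᵐᵒᵖ).symm ≪≫ₗ
    LinearEquiv.piCongrRight fun _ =>
      LinearMap.ringLmapEquivSelf S Sᵐᵒᵖ S ≪≫ₗ opLinearEquivSelf S

variable (M : Type*) [AddCommMonoid M] [Module S M]

theorem exists_dual_retract_pi [Module.Finite S M] [Module.Projective S M] :
    ∃ (n : ℕ) (i : (M →ₗ[S] S) →ₗ[Sᵐᵒᵖ] (Fin n → Sᵐᵒᵖ))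
      (p : (Fin n → Sᵐᵒᵖ) →ₗ[Sᵐᵒᵖ] (M →ₗ[S] S)), p ∘ₗ i = LinearMap.id := by
  obtain ⟨n, f, g, -, -, hfg⟩ := Module.Finite.exists_comp_eq_id_of_projective S M
  let e := piDualEquiv S (Fin n)
  refine ⟨n, e.toLinearMap ∘ₗ LinearMap.lcomp Sᵐᵒᵖ S f,
    LinearMap.lcomp Sᵐᵒᵖ S g ∘ₗ e.symm.toLinearMap, ?_⟩
  ext h m
  simpa using congrArg h (LinearMap.congr_fun hfg m)

instance finite_dual_mulOpposite [Module.Finite S M] [Module.Projective S M] :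
    Module.Finite Sᵐᵒᵖ (M →ₗ[S] S) :=
  have ⟨_, _, p, hpi⟩ := exists_dual_retract_pi S M
  Module.Finite.of_surjective p (LinearMap.surjective_of_comp_eq_id _ _ hpi)

instance projective_dual_mulOpposite [Module.Finite S M] [Module.Projective S M] :
    Module.Projective Sᵐᵒᵖ (M →ₗ[S] S) :=
  have ⟨_, i, p, hpi⟩ := exists_dual_retract_pi S M
  Module.Projective.of_split i p hpi

end Dual

section CompMulRight

variable {S R : Type*} [Semiring S] [NonUnitalNonAssocSemiring R] [Module S R] [Module Sᵐᵒᵖ R]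
  [IsScalarTower S R R] [SMulCommClass Sᵐᵒᵖ R R]

/-- The map `l_φ : R → Hom_S(R, S)`, `w ↦ (r ↦ φ (r * w))`, as a homomorphism of right
`S`-modules; the right action of `S` on `Hom_S(R, S)` is right multiplication on the values. -/
def compMulRight (φ : R →ₗ[S] S) (hφ : ∀ (c : Sᵐᵒᵖ) (r : R), φ (c • r) = c • φ r) :
    R →ₗ[Sᵐᵒᵖ] (R →ₗ[S] S) where
  toFun w := φ ∘ₗ LinearMap.mulRight S w
  map_add' v w := by
    ext r
    simp [mul_add]
  map_smul' c w := by
    ext r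
    simp [mul_smul_comm, hφ]

theorem frobenius_left_right_general [Module.Finite S R] [Module.Projective S R]
    (φ : R →ₗ[S] S) (hφ : ∀ (c : Sᵐᵒᵖ) (r : R), φ (c • r) = c • φ r)
    (hbij : Function.Bijective (compMulRight φ hφ)) :
    Module.Finite Sᵐᵒᵖ R ∧ Module.Projective Sᵐᵒᵖ R :=
  let e := LinearEquiv.ofBijective (compMulRight φ hφ) hbij
  ⟨Module.Finite.equiv e.symm, Module.Projective.of_equiv' e.symm⟩

end CompMulRight

section SMulViaMul

variable {S R : Type*} [Semigroup R] {θ : S → R}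

theorem isScalarTower_of_smul_eq_mul [SMul S R] (hR : ∀ (s : S) (r : R), s • r = θ s * r) :
    IsScalarTower S R R where
  smul_assoc s a b := by simp only [smul_eq_mul, hR, mul_assoc]

theorem smulCommClass_of_op_smul_eq_mul [SMul Sᵐᵒᵖ R]
    (hR' : ∀ (s : S) (r : R), op s • r = r * θ s) : SMulCommClass Sᵐᵒᵖ R R where
  smul_comm c a b := by
    induction c with
    | h s => simp only [smul_eq_mul, hR', mul_assoc]

end SMulViaMul

namespace IsReflexiveHom

variable {S : Type u} {R : Type v} [Ring S] [Ring R] {θ : S →+* R} {φ : R → S}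

/-- A reflexive homomorphism, bundled as a homomorphism of left `S`-modules. -/
def toLinearMap (hφ : IsReflexiveHom θ φ) [Module S R]
    (hR : ∀ (s : S) (r : R), s • r = θ s * r) : R →ₗ[S] S where
  toFun := φ
  map_add' := hφ.1
  map_smul' s r := by simpa only [hR, RingHom.id_apply, smul_eq_mul] using hφ.2.1 s r

variable (hφ : IsReflexiveHom θ φ) [Module S R] (hR : ∀ (s : S) (r : R), s • r = θ s * r)
  [Module Sᵐᵒᵖ R]

theorem toLinearMap_op_smul (hR' : ∀ (s : S) (r : R), op s • r = r * θ s) (c : Sᵐᵒᵖ) (r : R) :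
    hφ.toLinearMap hR (c • r) = c • hφ.toLinearMap hR r := by
  obtain ⟨-, -, map_mul_right, -⟩ := hφ
  induction c with
  | h s =>
    rw [hR']
    exact map_mul_right s r

theorem bijective_compMulRight [IsScalarTower S R R] [SMulCommClass Sᵐᵒᵖ R R]
    (hR' : ∀ (s : S) (r : R), op s • r = r * θ s) :
    Function.Bijective
      (compMulRight (hφ.toLinearMap hR) (hφ.toLinearMap_op_smul hR hR')) := by
  have ⟨_, _, _, injective, surjective, _⟩ := hφ
  constructor
  · intro v w hvw
    exact injective (congrArg DFunLike.coe hvw)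
  · intro g
    obtain ⟨w, hw⟩ := surjective g ⟨map_add g, fun s r => by simp [← hR]⟩
    exact ⟨w, LinearMap.ext fun r => (hw r).symm⟩

end IsReflexiveHom

theorem frobenius_left_right
    {S : Type u} {R : Type v} [Ring S] [Ring R] (θ : S →+* R)
    (φ : R → S) (hφ : IsReflexiveHom θ φ)
    [Module S R] (hR : ∀ (s : S) (r : R), s • r = θ s * r)
    [Module Sᵐᵒᵖ R] (hR' : ∀ (s : S) (r : R), MulOpposite.op s • r = r * θ s)
    (hfin : Module.Finite S R) (hproj : Module.Projective S R) :
    Module.Finite Sᵐᵒᵖ R ∧ Module.Projective Sᵐᵒᵖ R := by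
  have := isScalarTower_of_smul_eq_mul hR
  have := smulCommClass_of_op_smul_eq_mul hR'
  exact frobenius_left_right_general _ _ (hφ.bijective_compMulRight hR hR')
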